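/- arXiv:2408.11404 — 2 statements merged into one kernel-verified Lean document; each statement's English description precedes it below -/
import Mathlib

section
/- Let $l \ge 1$ and $k \ge 0$ be integers, let $e_1 < e_2 < \dots < e_l$ be integers, let $m_1, \dots, m_l$ be positive integers, and set $n = \sum_{j=1}^l m_j$. Assume $e_l - e_1 \le k+1$. Then the following identity of integers holds: $\sum_{j=1}^{l}(k+1)m_j^2 + \sum_{1\le i<j\le l}\big(\max(0,\,k+e_i-e_j+1)+\max(0,\,k+e_j-e_i+1)\big)m_im_j + 1 - \sum_{1\le i\le j\le l}(e_j-e_i+1)m_im_j - \big(k\tbinom{n+1}{2}+n\big) = \big(k\tbinom{n}{2}-n+1\big) - \sum_{1\le i<j\le l}(e_j-e_i-1)m_im_j$. -/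
open Finset

/-! By Riemann–Roch on `ℙ¹`, the bound `|e j - e i| ≤ k + 1` kills `H¹ (End E ⊗ 𝒪(k))`, so that
`h⁰ (End E ⊗ 𝒪(k)) = (k + 1) * n ^ 2`: for `i < j` the sections of `𝒪(eᵢ - eⱼ + k)` and
`𝒪(eⱼ - eᵢ + k)` contribute `2 * (k + 1)` together. Moreover `dim Aut E` exceeds `n ^ 2` by exactly
the sum over `i < j` that is subtracted from the genus. What remains is
`k * n ^ 2 = k * ((n + 1).choose 2 + n.choose 2)`. -/

theorem choose_two_succ_add_choose_two (n : ℕ) : (n + 1).choose 2 + n.choose 2 = n ^ 2 := by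
  qify
  rw [Nat.cast_choose_two, Nat.cast_choose_two]
  push_cast
  ring

theorem max_zero_add_max_zero_of_abs_sub_le {R : Type*} [CommRing R] [LinearOrder R]
    [IsOrderedRing R] {k a b : R} (h : |b - a| ≤ k + 1) :
    max 0 (k + a - b + 1) + max 0 (k + b - a + 1) = 2 * (k + 1) := by
  obtain ⟨hlower, hupper⟩ := abs_le.mp h
  have hab : 0 ≤ k + a - b + 1 := (sub_nonneg.mpr hupper).trans_eq (by ring)
  have hba : 0 ≤ k + b - a + 1 := (sub_nonneg.mpr hlower).trans_eq (by ring)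
  rw [max_eq_right hab, max_eq_right hba]
  ring

section Intervals

variable {ι : Type*} [LinearOrder ι] [LocallyFiniteOrder ι]

theorem sum_Icc_sum_Icc_eq_sum_diag_add {M : Type*} [AddCommMonoid M] (f : ι → ι → M) (a b : ι) :
    ∑ i ∈ Icc a b, ∑ j ∈ Icc i b, f i j
      = ∑ i ∈ Icc a b, f i i + ∑ i ∈ Icc a b, ∑ j ∈ Ioc i b, f i j := by
  rw [← sum_add_distrib]
  exact sum_congr rfl fun i hi ↦ (add_sum_Ioc_eq_sum_Icc (mem_Icc.mp hi).2).symm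

theorem sum_Icc_sum_Ico_comm {M : Type*} [AddCommMonoid M] (f : ι → ι → M) (a b : ι) :
    ∑ i ∈ Icc a b, ∑ j ∈ Ico a i, f i j = ∑ j ∈ Icc a b, ∑ i ∈ Ioc j b, f i j :=
  sum_comm' fun i j ↦ by simp only [mem_Icc, mem_Ico, mem_Ioc]; grind

theorem sq_sum_Icc {R : Type*} [CommSemiring R] (f : ι → R) (a b : ι) :
    (∑ i ∈ Icc a b, f i) ^ 2
      = ∑ i ∈ Icc a b, f i ^ 2 + 2 * ∑ i ∈ Icc a b, ∑ j ∈ Ioc i b, f i * f j := by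
  have hsplit : ∀ i ∈ Icc a b, ∑ j ∈ Icc a b, f i * f j
      = ∑ j ∈ Ico a i, f i * f j + ∑ j ∈ Icc i b, f i * f j := fun i hi ↦ by
    rw [← sum_union (disjoint_left.mpr fun j ↦ by simp only [mem_Ico, mem_Icc]; grind)]
    congr 1
    ext j
    simp only [mem_union, mem_Ico, mem_Icc] at hi ⊢
    grind
  rw [sq, sum_mul_sum, sum_congr rfl hsplit, sum_add_distrib, sum_Icc_sum_Icc_eq_sum_diag_add,
    sum_Icc_sum_Ico_comm]
  simp only [mul_comm (f _) (f _), ← sq]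
  ring

variable {R : Type*} [CommRing R]

theorem sum_Icc_sum_Icc_sub_add_one_mul_mul (e m : ι → R) (a b : ι) :
    ∑ i ∈ Icc a b, ∑ j ∈ Icc i b, (e j - e i + 1) * m i * m j
      = (∑ i ∈ Icc a b, m i) ^ 2
        + ∑ i ∈ Icc a b, ∑ j ∈ Ioc i b, (e j - e i - 1) * m i * m j := by
  have hdiag : ∀ i, (e i - e i + 1) * m i * m i = m i ^ 2 := fun i ↦ by ring
  have hoffdiag : ∀ i j, (e j - e i + 1) * m i * m j
      = 2 * (m i * m j) + (e j - e i - 1) * m i * m j := fun i j ↦ by ring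
  rw [sum_Icc_sum_Icc_eq_sum_diag_add, sq_sum_Icc]
  simp only [hdiag, hoffdiag, sum_add_distrib, mul_sum, add_assoc]

variable [LinearOrder R] [IsOrderedRing R]

theorem sum_sq_add_sum_max_zero_mul_mul {k : R} {e : ι → R} (m : ι → R) {a b : ι}
    (hgap : ∀ i ∈ Icc a b, ∀ j ∈ Ioc i b, |e j - e i| ≤ k + 1) :
    ∑ j ∈ Icc a b, (k + 1) * m j ^ 2
        + ∑ i ∈ Icc a b, ∑ j ∈ Ioc i b,
            (max 0 (k + e i - e j + 1) + max 0 (k + e j - e i + 1)) * m i * m j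
      = (k + 1) * (∑ i ∈ Icc a b, m i) ^ 2 := by
  have hpair : ∀ i ∈ Icc a b, ∀ j ∈ Ioc i b,
      (max 0 (k + e i - e j + 1) + max 0 (k + e j - e i + 1)) * m i * m j
        = 2 * (k + 1) * (m i * m j) := fun i hi j hj ↦ by
    rw [max_zero_add_max_zero_of_abs_sub_le (hgap i hi j hj), mul_assoc]
  rw [sum_congr rfl fun i hi ↦ sum_congr rfl (hpair i hi), sq_sum_Icc]
  simp only [← mul_sum]
  ring

theorem splitting_type_dimension_identity_general {k : R} {e : ι → R} {m : ι → ℕ} {a b : ι} {n : ℕ}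
    (hn : n = ∑ j ∈ Icc a b, m j)
    (hgap : ∀ i ∈ Icc a b, ∀ j ∈ Ioc i b, |e j - e i| ≤ k + 1) :
    (∑ j ∈ Icc a b, (k + 1) * (m j : R) ^ 2)
      + (∑ i ∈ Icc a b, ∑ j ∈ Ioc i b,
          (max 0 (k + e i - e j + 1) + max 0 (k + e j - e i + 1)) * (m i : R) * (m j : R))
      + 1
      - (∑ i ∈ Icc a b, ∑ j ∈ Icc i b, (e j - e i + 1) * (m i : R) * (m j : R))
      - (k * ((n + 1).choose 2 : R) + (n : R))
    = (k * (n.choose 2 : R) - (n : R) + 1)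
      - ∑ i ∈ Icc a b, ∑ j ∈ Ioc i b, (e j - e i - 1) * (m i : R) * (m j : R) := by
  have hrank : ∑ j ∈ Icc a b, (m j : R) = n := by rw [hn, Nat.cast_sum]
  have hchoose : ((n + 1).choose 2 : R) + (n.choose 2 : R) = (n : R) ^ 2 :=
    mod_cast congrArg (Nat.cast : ℕ → R) (choose_two_succ_add_choose_two n)
  rw [sum_sq_add_sum_max_zero_mul_mul (fun j ↦ (m j : R)) hgap,
    sum_Icc_sum_Icc_sub_add_one_mul_mul e (fun j ↦ (m j : R)), hrank]
  linear_combination -k * hchoose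

end Intervals

theorem abs_sub_le_of_monotoneOn_Icc {α R : Type*} [Preorder α] [AddCommGroup R] [LinearOrder R]
    [IsOrderedAddMonoid R] {f : α → R} {a b x y : α} (hf : MonotoneOn f (Set.Icc a b))
    (hx : x ∈ Set.Icc a b) (hy : y ∈ Set.Icc a b) : |f x - f y| ≤ f b - f a := by
  have ha : a ∈ Set.Icc a b := Set.left_mem_Icc.mpr (hx.1.trans hx.2)
  have hb : b ∈ Set.Icc a b := Set.right_mem_Icc.mpr (hx.1.trans hx.2)
  exact abs_sub_le_of_le_of_le (hf ha hx hx.1) (hf hx hb hx.2) (hf ha hy hy.1) (hf hy hb hy.2)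

theorem splitting_type_dimension_identity
    (l : ℕ) (hl : 1 ≤ l) (k : ℤ) (hk : 0 ≤ k)
    (e : ℕ → ℤ) (he : ∀ i j, 1 ≤ i → i < j → j ≤ l → e i < e j)
    (m : ℕ → ℕ) (hm : ∀ j ∈ Icc 1 l, 1 ≤ m j)
    (n : ℕ) (hn : n = ∑ j ∈ Icc 1 l, m j)
    (hel : e l - e 1 ≤ k + 1) :
    (∑ j ∈ Icc 1 l, (k + 1) * (m j : ℤ) ^ 2)
      + (∑ i ∈ Icc 1 l, ∑ j ∈ Icc (i + 1) l,
          (max 0 (k + e i - e j + 1) + max 0 (k + e j - e i + 1)) * (m i : ℤ) * (m j : ℤ))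
      + 1
      - (∑ i ∈ Icc 1 l, ∑ j ∈ Icc i l, (e j - e i + 1) * (m i : ℤ) * (m j : ℤ))
      - (k * ((n + 1).choose 2 : ℤ) + (n : ℤ))
    = (k * (n.choose 2 : ℤ) - (n : ℤ) + 1)
      - ∑ i ∈ Icc 1 l, ∑ j ∈ Icc (i + 1) l, (e j - e i - 1) * (m i : ℤ) * (m j : ℤ) := by
  have hmono : StrictMonoOn e (Set.Icc 1 l) := fun i hi j hj hij ↦ he i j hi.1 hij hj.2
  have hgap : ∀ i ∈ Icc 1 l, ∀ j ∈ Ioc i l, |e j - e i| ≤ k + 1 := fun i hi j hj ↦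
    have hj' : j ∈ Set.Icc 1 l :=
      ⟨(mem_Icc.mp hi).1.trans (mem_Ioc.mp hj).1.le, (mem_Ioc.mp hj).2⟩
    (abs_sub_le_of_monotoneOn_Icc hmono.monotoneOn hj' (mem_Icc.mp hi)).trans hel
  simpa only [Icc_add_one_left_eq_Ioc] using splitting_type_dimension_identity_general hn hgap
end

section
/- Let $r \ge 2$ be an integer, let $s$ be an integer with $0 \le s \le r-1$, and let $g$ be a real number with $g > \frac{r(r+1)(r+4)}{r-1}$. Then $\frac{sg}{s+1} + \frac{(r-s-1)g}{r-s} + g - 2 + r > 2\Big(\frac{rg}{r+1} + r + 1\Big)$. -/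
/-!
For fixed `r`, the sum `s / (s + 1) + (r - s - 1) / (r - s) = 2 - ((s + 1)⁻¹ + (r - s)⁻¹)` is
smallest at the endpoints `s = 0` and `s = r - 1`, because `a⁻¹ + b⁻¹` with `a, b ≥ 1` and `a + b`
fixed is largest when one of the two is `1`. At an endpoint the difference of the two sides is
`(r - 1) / (r * (r + 1)) * g - (r + 4)`, whose sign change is exactly the threshold on `g`.
-/

section OrderedField

variable {K : Type*} [Field K] [LinearOrder K] [IsStrictOrderedRing K] {a b r s g : K}

theorem inv_add_inv_le_one_add_inv_add_sub_one (ha : 1 ≤ a) (hb : 1 ≤ b) :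
    a⁻¹ + b⁻¹ ≤ 1 + (a + b - 1)⁻¹ := by
  have ha₀ : 0 < a := by linarith
  have hb₀ : 0 < b := by linarith
  have hab₀ : 0 < a + b - 1 := by linarith
  have add_sub_one_le_mul : a + b - 1 ≤ a * b := by
    linarith [mul_nonneg (sub_nonneg.2 ha) (sub_nonneg.2 hb)]
  calc
    a⁻¹ + b⁻¹ = (a + b) / (a * b) := inv_add_inv ha₀.ne' hb₀.ne'
    _ ≤ (a + b) / (a + b - 1) := by gcongr
    _ = 1 + (a + b - 1)⁻¹ := by field_simp; ring

theorem sub_one_mul_div_le_mul_div_add_mul_div (hs : 0 ≤ s) (hsr : s ≤ r - 1) (hg : 0 ≤ g) :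
    (r - 1) * g / r ≤ s * g / (s + 1) + (r - s - 1) * g / (r - s) := by
  have hr₀ : r ≠ 0 := by linarith
  have hs₀ : s + 1 ≠ 0 := by linarith
  have hrs₀ : r - s ≠ 0 := by linarith
  have inv_sum_le : (s + 1)⁻¹ + (r - s)⁻¹ ≤ 1 + r⁻¹ := by
    convert inv_add_inv_le_one_add_inv_add_sub_one (a := s + 1) (b := r - s)
      (by linarith) (by linarith) using 3
    ring
  calc
    (r - 1) * g / r = (2 - (1 + r⁻¹)) * g := by field_simp; ring
    _ ≤ (2 - ((s + 1)⁻¹ + (r - s)⁻¹)) * g := by gcongr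
    _ = s * g / (s + 1) + (r - s - 1) * g / (r - s) := by field_simp; ring

theorem two_mul_lt_sub_one_mul_div_add_iff (hr : 1 < r) :
    2 * (r * g / (r + 1) + r + 1) < (r - 1) * g / r + g - 2 + r ↔
      r * (r + 1) * (r + 4) / (r - 1) < g := by
  have hr₀ : 0 < r := by linarith
  have hr_add : 0 < r + 1 := by linarith
  have hr_sub : 0 < r - 1 := by linarith
  have sub_eq : (r - 1) * g / r + g - 2 + r - 2 * (r * g / (r + 1) + r + 1) =
      g * (r - 1) / (r * (r + 1)) - (r + 4) := by
    field_simp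
    ring
  rw [← sub_pos, sub_eq, sub_pos, lt_div_iff₀ (mul_pos hr₀ hr_add), div_lt_iff₀ hr_sub,
    mul_comm (r + 4)]

theorem gonality_sequence_key_inequality_general (hr : 1 < r) (hs : 0 ≤ s) (hsr : s ≤ r - 1)
    (hg : r * (r + 1) * (r + 4) / (r - 1) < g) :
    2 * (r * g / (r + 1) + r + 1) <
      s * g / (s + 1) + (r - s - 1) * g / (r - s) + g - 2 + r := by
  have hg₀ : 0 ≤ g := (div_nonneg (by positivity) (sub_nonneg.2 hr.le)).trans hg.le
  calc
    2 * (r * g / (r + 1) + r + 1) < (r - 1) * g / r + g - 2 + r :=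
      (two_mul_lt_sub_one_mul_div_add_iff hr).2 hg
    _ ≤ s * g / (s + 1) + (r - s - 1) * g / (r - s) + g - 2 + r := by
      gcongr
      exact sub_one_mul_div_le_mul_div_add_mul_div hs hsr hg₀

end OrderedField

theorem gonality_sequence_key_inequality
    (r s : ℤ) (hr : 2 ≤ r) (hs0 : 0 ≤ s) (hs1 : s ≤ r - 1)
    (g : ℝ) (hg : (r : ℝ) * ((r : ℝ) + 1) * ((r : ℝ) + 4) / ((r : ℝ) - 1) < g) :
    2 * ((r : ℝ) * g / ((r : ℝ) + 1) + (r : ℝ) + 1)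
      < (s : ℝ) * g / ((s : ℝ) + 1) + ((r : ℝ) - (s : ℝ) - 1) * g / ((r : ℝ) - (s : ℝ))
          + g - 2 + (r : ℝ) :=
  gonality_sequence_key_inequality_general (by exact_mod_cast hr) (by exact_mod_cast hs0)
    (by exact_mod_cast hs1) hg
end
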